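/- Let ξ be an aligned slope datum and let λ be a ξ-regular colored ℓ-multi-partition. Suppose r = (k;i,j) is a removable ī-node of λ and a = (k′;i′,j′) is an addable ī-node of λ with h^ξ(a) > h^ξ(r). Then h^ξ(a) ≥ h^ξ(r) + ξ_Ω + ξ_Ω̄, and moreover i′ − 1 ≥ i or j′ − 1 ≥ j. -/

import Mathlib

/-!
Write `e` for the last box of row `i` in `λ(s)` and `f` for the node just below column `j` of
`λ(t)`. The triple `((i, j), s, t)` with `(i, j) ∈ λ(s)` is illegal exactly when `e` and `f` have
the same color and `0 < h(f) - h(e) < ξ_Ω + ξ_Ω̄`. If `j' ≤ j`, apply this to the box `(i, j')` of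
`λ(k)`: then `e = r` and `f = a`. If `j < j'`, apply it to the box `(i', j)` of `λ(k')`: then `e` is
the left neighbour of `a` and `f` the node below `r`, so that
`h(f) - h(e) = ξ_Ω + ξ_Ω̄ - (h(a) - h(r))`. Either way regularity keeps `h(a) - h(r)` out of the
interval `(0, ξ_Ω + ξ_Ω̄)`. Finally, if `i' ≤ i` and `j' ≤ j`, then
`h(a) - h(r) ≤ ξ_{k'} - ξ_k < ξ_Ω + ξ_Ω̄` by alignment.
-/

open scoped Classical

/-- A partition: `part m` is the `(m+1)`-st part, i.e. `λ_{m+1}`. -/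
structure Ptn where
  part : ℕ → ℕ
  antitone' : ∀ i j : ℕ, i ≤ j → part j ≤ part i
  finite' : ∃ N : ℕ, ∀ i ≥ N, part i = 0

namespace Ptn

/-- `λ_i`, for `i ≥ 1`. -/
def row (q : Ptn) (i : ℕ) : ℕ := q.part (i - 1)

/-- Membership of the box `(i,j)` (boxes have `i, j ≥ 1`). -/
def mem (q : Ptn) (i j : ℕ) : Prop := 1 ≤ i ∧ 1 ≤ j ∧ j ≤ q.row i

/-- The dual partition `λ'_j = #{i ≥ 1 : λ_i ≥ j}`. -/
noncomputable def dual (q : Ptn) (j : ℕ) : ℕ := Nat.card {i : ℕ // 1 ≤ i ∧ j ≤ q.row i}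

/-- `arm_λ(i,j) = λ_i - j`. -/
def arm (q : Ptn) (i j : ℕ) : ℤ := (q.row i : ℤ) - (j : ℤ)

/-- `leg_λ(i,j) = λ'_j - i`. -/
noncomputable def leg (q : Ptn) (i j : ℕ) : ℤ := (q.dual j : ℤ) - (i : ℤ)

/-- `(i,j)` is an addable node of `q`. -/
def Addable (q : Ptn) (i j : ℕ) : Prop :=
  1 ≤ i ∧ 1 ≤ j ∧ q.row i = j - 1 ∧ (i = 1 ∨ j ≤ q.row (i - 1))

/-- `(i,j)` is a removable node of `q`. -/
def Removable (q : Ptn) (i j : ℕ) : Prop :=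
  1 ≤ i ∧ 1 ≤ j ∧ q.row i = j ∧ q.row (i + 1) < j

/-- The partition obtained by adding the box `(i,j)` (when `(i,j)` is addable). -/
noncomputable def addBox (q : Ptn) (i j : ℕ) : Ptn :=
  if h : ∃ q' : Ptn, ∀ m : ℕ, q'.part m = if m = i - 1 then j else q.part m then
    h.choose else q

/-- The partition obtained by removing the box `(i,j)` (when `(i,j)` is removable). -/
noncomputable def removeBox (q : Ptn) (i j : ℕ) : Ptn :=
  if h : ∃ q' : Ptn, ∀ m : ℕ, q'.part m = if m = i - 1 then j - 1 else q.part m then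
    h.choose else q

/-- The empty partition. -/
def empty : Ptn := ⟨fun _ => 0, fun _ _ _ => le_rfl, ⟨0, fun _ _ => rfl⟩⟩

end Ptn
/-- Nodes (triples) `(k; i, j)`. -/
abbrev Node (l : ℕ) := Fin l × ℕ × ℕ

/-- Multi-partitions with `l` components. -/
abbrev MP (l : ℕ) := Fin l → Ptn

/-- The color `p(k) - i + j` of the triple `(k;i,j)`. -/
def colorOf (n l : ℕ) (p : Fin l → ZMod n) (x : Node l) : ZMod n :=
  p x.1 - (x.2.1 : ZMod n) + (x.2.2 : ZMod n)

/-- `(k;i,j)` is a box of the multi-partition `lam`. -/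
def IsBox (l : ℕ) (lam : MP l) (x : Node l) : Prop := (lam x.1).mem x.2.1 x.2.2

/-- `(k;i,j)` is an addable `ib`-node of `lam`. -/
def IsAdd (n l : ℕ) (lam : MP l) (p : Fin l → ZMod n) (ib : ZMod n) (x : Node l) : Prop :=
  (lam x.1).Addable x.2.1 x.2.2 ∧ colorOf n l p x = ib

/-- `(k;i,j)` is a removable `ib`-node of `lam`. -/
def IsRem (n l : ℕ) (lam : MP l) (p : Fin l → ZMod n) (ib : ZMod n) (x : Node l) : Prop :=
  (lam x.1).Removable x.2.1 x.2.2 ∧ colorOf n l p x = ib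

/-- Add the box `x` to the multi-partition `lam`. -/
noncomputable def MPadd {l : ℕ} (lam : MP l) (x : Node l) : MP l :=
  Function.update lam x.1 ((lam x.1).addBox x.2.1 x.2.2)

/-- Remove the box `x` from the multi-partition `lam`. -/
noncomputable def MPremove {l : ℕ} (lam : MP l) (x : Node l) : MP l :=
  Function.update lam x.1 ((lam x.1).removeBox x.2.1 x.2.2)

/-- The empty multi-partition. -/
def MPempty (l : ℕ) : MP l := fun _ => Ptn.empty

/-- A slope datum `(ξ_Ω, ξ_Ω̄, ξ_1, …, ξ_l)` of positive reals. -/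
structure Slope (l : ℕ) where
  xiO : ℝ
  xiObar : ℝ
  xi : Fin l → ℝ
  xiO_pos : 0 < xiO
  xiObar_pos : 0 < xiObar
  xi_pos : ∀ k, 0 < xi k

namespace Slope

/-- The height `h^ξ(k;i,j) = ξ_k + ξ_Ω i + ξ_Ω̄ j`. -/
def h {l : ℕ} (ξ : Slope l) (x : Node l) : ℝ :=
  ξ.xi x.1 + ξ.xiO * (x.2.1 : ℝ) + ξ.xiObar * (x.2.2 : ℝ)

/-- `ξ` is general: distinct triples have distinct heights. -/
def General {l : ℕ} (ξ : Slope l) : Prop :=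
  ∀ x y : Node l, 1 ≤ x.2.1 → 1 ≤ x.2.2 → 1 ≤ y.2.1 → 1 ≤ y.2.2 → ξ.h x = ξ.h y → x = y

/-- `ξ` is aligned: `|ξ_s - ξ_t| < ξ_Ω + ξ_Ω̄` for all `s, t`. -/
def Aligned {l : ℕ} (ξ : Slope l) : Prop :=
  ∀ s t : Fin l, |ξ.xi s - ξ.xi t| < ξ.xiO + ξ.xiObar

/-- `ξ` is integral: all entries are (positive) integers. -/
def Integral {l : ℕ} (ξ : Slope l) : Prop :=
  (∃ m : ℤ, ξ.xiO = (m : ℝ)) ∧ (∃ m : ℤ, ξ.xiObar = (m : ℝ)) ∧ ∀ k, ∃ m : ℤ, ξ.xi k = (m : ℝ)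

end Slope
/-- The triple `((i,j), s, t)` is `ξ`-illegal for `lam`. -/
def Illegal (n l : ℕ) (lam : MP l) (p : Fin l → ZMod n) (ξ : Slope l)
    (i j : ℕ) (s t : Fin l) : Prop :=
  (lam s).mem i j ∧
  (p s - p t + (((lam s).arm i j + (lam t).leg i j + 1 : ℤ) : ZMod n) = 0) ∧
  (-ξ.xiO < ξ.xi t - ξ.xi s + ξ.xiO * (((lam t).leg i j : ℤ) : ℝ)
      - ξ.xiObar * (((lam s).arm i j : ℤ) : ℝ)) ∧
  (ξ.xi t - ξ.xi s + ξ.xiO * (((lam t).leg i j : ℤ) : ℝ)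
      - ξ.xiObar * (((lam s).arm i j : ℤ) : ℝ) < ξ.xiObar)

/-- `lam` is `ξ`-regular: no triple is `ξ`-illegal for `lam`. -/
def Regular (n l : ℕ) (lam : MP l) (p : Fin l → ZMod n) (ξ : Slope l) : Prop :=
  ∀ (i j : ℕ) (s t : Fin l), ¬ Illegal n l lam p ξ i j s t

namespace Ptn

variable {q : Ptn} {i j : ℕ}

lemma row_antitone (q : Ptn) : Antitone q.row := fun _ _ hab =>
  q.antitone' _ _ (Nat.sub_le_sub_right hab 1)

lemma dual_eq_of_row_succ_lt (hle : i = 0 ∨ j ≤ q.row i) (hlt : q.row (i + 1) < j) :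
    q.dual j = i := by
  have mem_Icc_iff (m : ℕ) : m ∈ Finset.Icc 1 i ↔ 1 ≤ m ∧ j ≤ q.row m := by
    rw [Finset.mem_Icc]
    refine and_congr_right fun hm => ⟨fun hmi => ?_, fun hjm => ?_⟩
    · exact (hle.resolve_left (by lia)).trans (q.row_antitone hmi)
    · by_contra! him
      exact (hjm.trans (q.row_antitone him)).not_gt hlt
  rw [dual, Nat.subtype_card _ mem_Icc_iff, Nat.card_Icc, Nat.add_sub_cancel]

lemma Removable.dual_eq (h : q.Removable i j) : q.dual j = i :=
  dual_eq_of_row_succ_lt (.inr h.2.2.1.ge) h.2.2.2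

lemma Addable.row_add_one (h : q.Addable i j) : q.row i + 1 = j := by
  rw [h.2.2.1, Nat.sub_add_cancel h.2.1]

lemma Addable.dual_add_one (h : q.Addable i j) : q.dual j + 1 = i := by
  obtain ⟨d, rfl⟩ := Nat.exists_eq_add_of_le' h.1
  have hle : d = 0 ∨ j ≤ q.row d := by simpa using h.2.2.2
  rw [dual_eq_of_row_succ_lt hle (Nat.lt_of_succ_le h.row_add_one.le)]

end Ptn

section Nodes

variable {n l : ℕ} {p : Fin l → ZMod n}

lemma colorOf_row_succ (k : Fin l) (i j : ℕ) :
    colorOf n l p (k, i + 1, j) = colorOf n l p (k, i, j) - 1 := by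
  simp only [colorOf, Nat.cast_add, Nat.cast_one]
  ring

lemma colorOf_col_succ (k : Fin l) (i j : ℕ) :
    colorOf n l p (k, i, j + 1) = colorOf n l p (k, i, j) + 1 := by
  simp only [colorOf, Nat.cast_add, Nat.cast_one]
  ring

end Nodes

namespace Slope

variable {l : ℕ} {ξ : Slope l}

lemma h_row_succ (k : Fin l) (i j : ℕ) : ξ.h (k, i + 1, j) = ξ.h (k, i, j) + ξ.xiO := by
  simp only [h, Nat.cast_add, Nat.cast_one]
  ring

lemma h_col_succ (k : Fin l) (i j : ℕ) : ξ.h (k, i, j + 1) = ξ.h (k, i, j) + ξ.xiObar := by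
  simp only [h, Nat.cast_add, Nat.cast_one]
  ring

lemma h_sub_h_le_of_snd_le {x y : Node l} (hxy : x.2 ≤ y.2) :
    ξ.h x - ξ.h y ≤ ξ.xi x.1 - ξ.xi y.1 := by
  have hrow : ξ.xiO * (x.2.1 : ℝ) ≤ ξ.xiO * y.2.1 :=
    mul_le_mul_of_nonneg_left (mod_cast hxy.1) ξ.xiO_pos.le
  have hcol : ξ.xiObar * (x.2.2 : ℝ) ≤ ξ.xiObar * y.2.2 :=
    mul_le_mul_of_nonneg_left (mod_cast hxy.2) ξ.xiObar_pos.le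
  simp only [h]
  linarith

lemma Aligned.h_lt_add_of_snd_le (hal : ξ.Aligned) {x y : Node l} (hxy : x.2 ≤ y.2) :
    ξ.h x < ξ.h y + ξ.xiO + ξ.xiObar := by
  linarith [h_sub_h_le_of_snd_le (ξ := ξ) hxy, (abs_lt.mp (hal x.1 y.1)).2]

end Slope

section NeighboringNodes

variable {l : ℕ} {lam : MP l} {k : Fin l} {i j : ℕ}

/-- The last box of row `i` of `lam s`, at which the arms of that row end. It is the node
`(s; i, 0)` if the row is empty. -/
def rowEnd (lam : MP l) (s : Fin l) (i : ℕ) : Node l := (s, i, (lam s).row i)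

/-- The node just below column `j` of `lam t`, at which the legs of that column end; rows are
numbered downwards. -/
noncomputable def belowCol (lam : MP l) (t : Fin l) (j : ℕ) : Node l :=
  (t, (lam t).dual j + 1, j)

lemma Ptn.Removable.rowEnd_eq (h : (lam k).Removable i j) : rowEnd lam k i = (k, i, j) := by
  rw [rowEnd, h.2.2.1]

lemma Ptn.Removable.belowCol_eq (h : (lam k).Removable i j) :
    belowCol lam k j = (k, i + 1, j) := by
  rw [belowCol, h.dual_eq]

lemma Ptn.Addable.belowCol_eq (h : (lam k).Addable i j) : belowCol lam k j = (k, i, j) := by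
  rw [belowCol, h.dual_add_one]

end NeighboringNodes

section Regularity

variable {n l : ℕ} {lam : MP l} {p : Fin l → ZMod n} {ξ : Slope l}

lemma illegal_iff {i j : ℕ} {s t : Fin l} :
    Illegal n l lam p ξ i j s t ↔ (lam s).mem i j ∧
      colorOf n l p (rowEnd lam s i) = colorOf n l p (belowCol lam t j) ∧
      ξ.h (rowEnd lam s i) < ξ.h (belowCol lam t j) ∧
      ξ.h (belowCol lam t j) < ξ.h (rowEnd lam s i) + ξ.xiO + ξ.xiObar := by
  simp only [Illegal, rowEnd, belowCol, colorOf_row_succ, Slope.h_row_succ]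
  simp only [Ptn.arm, Ptn.leg, colorOf, Slope.h]
  push_cast
  refine and_congr_right' (and_congr ?_ (and_congr ?_ ?_))
  · rw [← sub_eq_zero (b := _ - 1)]
    ring_nf
  · constructor <;> intro <;> linarith
  · constructor <;> intro <;> linarith

lemma Regular.h_rowEnd_add_le_h_belowCol (hreg : Regular n l lam p ξ) {i j : ℕ} {s t : Fin l}
    (hmem : (lam s).mem i j)
    (hcolor : colorOf n l p (rowEnd lam s i) = colorOf n l p (belowCol lam t j))
    (hlt : ξ.h (rowEnd lam s i) < ξ.h (belowCol lam t j)) :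
    ξ.h (rowEnd lam s i) + ξ.xiO + ξ.xiObar ≤ ξ.h (belowCol lam t j) := by
  by_contra! hclose
  exact hreg i j s t (illegal_iff.mpr ⟨hmem, hcolor, hlt, hclose⟩)

section RemovableAddable

variable {k k' : Fin l} {i j i' j' : ℕ}

lemma Regular.h_removable_add_le_of_col_le (hreg : Regular n l lam p ξ)
    (hr : (lam k).Removable i j) (ha : (lam k').Addable i' j') (hj : j' ≤ j)
    (hcolor : colorOf n l p (k, i, j) = colorOf n l p (k', i', j'))
    (hlt : ξ.h (k, i, j) < ξ.h (k', i', j')) :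
    ξ.h (k, i, j) + ξ.xiO + ξ.xiObar ≤ ξ.h (k', i', j') := by
  have hmem : (lam k).mem i j' := ⟨hr.1, ha.2.1, hj.trans hr.2.2.1.ge⟩
  rw [← hr.rowEnd_eq, ← ha.belowCol_eq] at hcolor hlt ⊢
  exact hreg.h_rowEnd_add_le_h_belowCol hmem hcolor hlt

lemma Regular.h_removable_add_le_of_col_lt (hreg : Regular n l lam p ξ)
    (hr : (lam k).Removable i j) (ha : (lam k').Addable i' j') (hj : j < j')
    (hcolor : colorOf n l p (k, i, j) = colorOf n l p (k', i', j'))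
    (hlt : ξ.h (k, i, j) < ξ.h (k', i', j')) :
    ξ.h (k, i, j) + ξ.xiO + ξ.xiObar ≤ ξ.h (k', i', j') := by
  obtain rfl : (lam k').row i' + 1 = j' := ha.row_add_one
  have hmem : (lam k').mem i' j := ⟨ha.1, hr.2.1, Nat.le_of_lt_succ hj⟩
  rw [colorOf_col_succ] at hcolor
  rw [Slope.h_col_succ] at hlt ⊢
  have hcolor' : colorOf n l p (rowEnd lam k' i') = colorOf n l p (belowCol lam k j) := by
    rw [hr.belowCol_eq, colorOf_row_succ, hcolor, add_sub_cancel_right, rowEnd]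
  by_contra! hclose
  have hlt' : ξ.h (rowEnd lam k' i') < ξ.h (belowCol lam k j) := by
    rw [hr.belowCol_eq, Slope.h_row_succ, rowEnd]
    linarith
  have hgap := hreg.h_rowEnd_add_le_h_belowCol hmem hcolor' hlt'
  rw [hr.belowCol_eq, Slope.h_row_succ, rowEnd] at hgap
  linarith

end RemovableAddable

theorem Regular.h_removable_add_le_h_addable (hreg : Regular n l lam p ξ) {ib : ZMod n}
    {r a : Node l} (hr : IsRem n l lam p ib r) (ha : IsAdd n l lam p ib a)
    (hlt : ξ.h r < ξ.h a) : ξ.h r + ξ.xiO + ξ.xiObar ≤ ξ.h a := by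
  obtain ⟨hrem, hr_color⟩ := hr
  obtain ⟨hadd, ha_color⟩ := ha
  have hcolor := hr_color.trans ha_color.symm
  obtain hj | hj := le_or_gt a.2.2 r.2.2
  · exact hreg.h_removable_add_le_of_col_le hrem hadd hj hcolor hlt
  · exact hreg.h_removable_add_le_of_col_lt hrem hadd hj hcolor hlt

end Regularity

/-- for an aligned slope datum `ξ` and a `ξ`-regular `lam`, a removable `ib`-node
`r = (k;i,j)` and an addable `ib`-node `a = (k';i',j')` with `h(a) > h(r)` satisfy
`h(a) ≥ h(r) + ξ_Ω + ξ_Ω̄`, and moreover `i' − 1 ≥ i` or `j' − 1 ≥ j`. -/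
theorem stmt4 (n l : ℕ) (hn : 1 ≤ n) (hl : 1 ≤ l) (lam : MP l) (p : Fin l → ZMod n)
    (ξ : Slope l) (hal : ξ.Aligned) (hreg : Regular n l lam p ξ)
    (ib : ZMod n) (k k' : Fin l) (i j i' j' : ℕ)
    (hr : IsRem n l lam p ib (k, i, j)) (ha : IsAdd n l lam p ib (k', i', j'))
    (hgt : ξ.h (k', i', j') > ξ.h (k, i, j)) :
    ξ.h (k, i, j) + ξ.xiO + ξ.xiObar ≤ ξ.h (k', i', j') ∧ (i + 1 ≤ i' ∨ j + 1 ≤ j') := by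
  have hgap := hreg.h_removable_add_le_h_addable hr ha hgt
  refine ⟨hgap, ?_⟩
  by_contra! hno
  have hle : (i', j') ≤ (i, j) := ⟨Nat.le_of_lt_succ hno.1, Nat.le_of_lt_succ hno.2⟩
  exact (hal.h_lt_add_of_snd_le (x := (k', i', j')) (y := (k, i, j)) hle).not_ge hgap
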